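/- Let R be a commutative ring and let I and J be finitely generated ideals of R. Then Loc(R/I) ∩ Loc(R/J) = Loc(R/(I + J)) in D(R). -/

import Mathlib

open CategoryTheory CategoryTheory.Limits CategoryTheory.Pretriangulated ZeroObject

universe w w' v u

section TriangulatedDefs

variable {T : Type u} [Category.{v} T] [Preadditive T] [HasZeroObject T]
  [HasShift T ℤ] [∀ n : ℤ, (shiftFunctor T n).Additive] [Pretriangulated T]

/-- A localizing subcategory of a (pre)triangulated category, encoded as a set of
objects: it is closed under isomorphisms, contains the zero object, is stable
under shifts, closed under cones of distinguished triangles (hence a full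
triangulated subcategory), and closed under arbitrary small coproducts
(phrased via colimit cofans, so that no global existence of coproducts
is needed). -/
structure IsLocalizingSub (S : Set T) : Prop where
  zero_mem : (0 : T) ∈ S
  mem_of_iso : ∀ {x y : T}, (x ≅ y) → x ∈ S → y ∈ S
  shift_mem : ∀ (n : ℤ) {x : T}, x ∈ S → x⟦n⟧ ∈ S
  cone_mem : ∀ (Tr : Triangle T), Tr ∈ distinguishedTriangles →
    Tr.obj₁ ∈ S → Tr.obj₂ ∈ S → Tr.obj₃ ∈ S
  coprod_mem : ∀ {ι : Type w} (f : ι → T) (c : Cofan f), IsColimit c →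
    (∀ i, f i ∈ S) → c.pt ∈ S

/-- A colocalizing subcategory: as `IsLocalizingSub` but with products instead
of coproducts. -/
structure IsColocalizingSub (S : Set T) : Prop where
  zero_mem : (0 : T) ∈ S
  mem_of_iso : ∀ {x y : T}, (x ≅ y) → x ∈ S → y ∈ S
  shift_mem : ∀ (n : ℤ) {x : T}, x ∈ S → x⟦n⟧ ∈ S
  cone_mem : ∀ (Tr : Triangle T), Tr ∈ distinguishedTriangles →
    Tr.obj₁ ∈ S → Tr.obj₂ ∈ S → Tr.obj₃ ∈ S
  prod_mem : ∀ {ι : Type w} (f : ι → T) (c : Fan f), IsLimit c →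
    (∀ i, f i ∈ S) → c.pt ∈ S

/-- `Loc S`: the smallest localizing subcategory containing the set of
objects `S` (the intersection of all localizing subcategories containing it). -/
def Loc (S : Set T) : Set T :=
  ⋂₀ {L : Set T | IsLocalizingSub.{w} L ∧ S ⊆ L}

/-- The right orthogonal of a set of objects. -/
def rightOrth (C : Set T) : Set T :=
  {x : T | ∀ ⦃c : T⦄, c ∈ C → ∀ (g : c ⟶ x), g = 0}

end TriangulatedDefs

section CompactDefs

variable {T : Type u} [Category.{v} T] [Preadditive T]

/-- The canonical comparison map `⨁ᵢ Hom(x, fᵢ) →+ Hom(x, ∐ f)` associated to a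
cofan `c` on a family `f`. -/
noncomputable def cofanHomComparison {ι : Type w} (x : T) (f : ι → T) (c : Cofan f) :
    (Π₀ i, (x ⟶ f i)) →+ (x ⟶ c.pt) :=
  letI := Classical.decEq ι
  DFinsupp.sumAddHom (fun i => AddMonoidHom.mk' (fun φ => φ ≫ c.inj i)
    (fun φ ψ => Preadditive.add_comp _ _ _ φ ψ (c.inj i)))

/-- An object `x` is compact if `Hom(x, -)` commutes with arbitrary small
coproducts, i.e. for every colimit cofan on a family `f`, the canonical map
`⨁ᵢ Hom(x, fᵢ) → Hom(x, ∐ f)` is bijective. -/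
def IsCompactObj (x : T) : Prop :=
  ∀ ⦃ι : Type w⦄ (f : ι → T) (c : Cofan f), IsColimit c →
    Function.Bijective (cofanHomComparison x f c)

end CompactDefs

section DR

variable (R : Type u) [CommRing R] [HasDerivedCategory.{w'} (ModuleCat.{u} R)]

/-- The `R`-module `M`, regarded as an object of the derived category `D(R)`,
as a complex concentrated in degree `0`. -/
noncomputable def smod (M : ModuleCat.{u} R) : DerivedCategory (ModuleCat.{u} R) :=
  (DerivedCategory.singleFunctor (ModuleCat.{u} R) 0).obj M

end DR

/-!
For finitely generated `I`, the category `Loc(R/I)` consists of the complexes `Y` such that every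
`a ∈ I` acts locally nilpotently on `Hom(R[k], Y)` for all `k`. Torsion for `I` and for `J` is the
same as torsion for `I + J`, whence the theorem.

The torsion objects form a localizing subcategory because `R[k]` is compact, and they contain `R/I`.
Conversely, let `Y` be torsion. Every `R[k] ⟶ Y` factors through a Koszul-type complex `K`, obtained
from `R[k]` by iterated cones of powers of generators of `I`. As `K` is bounded and its identity is
torsion, truncation reduces `K ∈ Loc(R/I)` to modules killed by a power of `I`, hence to modules
killed by `I`, which are resolved by sums of copies of `R/I`. The cone `Y ⟶ Y'` of the map to `Y`
from the sum of all these `K` is zero on every `Hom(R[k], -)` and an isomorphism modulo `Loc(R/I)`.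
Iterating gives a tower whose homotopy colimit vanishes although `Y` maps to it isomorphically
modulo `Loc(R/I)`, so `Y ∈ Loc(R/I)`. The same tower argument handles the resolutions by copies of
`R/I`.
-/

section Localizing

variable {T : Type u} [Category.{v} T] [Preadditive T] [HasZeroObject T]
  [HasShift T ℤ] [∀ n : ℤ, (shiftFunctor T n).Additive] [Pretriangulated T]

namespace IsLocalizingSub

variable {L : Set T}

lemma isClosedUnderIsomorphisms (hL : IsLocalizingSub.{w} L) :
    ObjectProperty.IsClosedUnderIsomorphisms (· ∈ L) where
  of_iso e hX := hL.mem_of_iso e hX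

lemma isTriangulated (hL : IsLocalizingSub.{w} L) : ObjectProperty.IsTriangulated (· ∈ L) where
  exists_zero := ⟨0, isZero_zero T, hL.zero_mem⟩
  isStableUnderShiftBy n := { le_shift := fun _ hX => hL.shift_mem n hX }
  ext₂' Tr hT h₁ h₃ := ⟨_, hL.cone_mem Tr.invRotate (inv_rot_of_distTriang _ hT)
    (hL.shift_mem (-1) h₃) h₁, ⟨Iso.refl _⟩⟩

lemma isClosedUnderColimitsOfShape_discrete (hL : IsLocalizingSub.{w} L)
    (ι : Type*) [Small.{w} ι] :
    ObjectProperty.IsClosedUnderColimitsOfShape (· ∈ L) (Discrete ι) where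
  colimitsOfShape_le := by
    rintro X ⟨p⟩
    let c : Cofan fun i => p.diag.obj ⟨i⟩ := Cofan.mk X fun i => p.ι.app ⟨i⟩
    let d (s : Cofan fun i => p.diag.obj ⟨i⟩) : Cocone p.diag :=
      Cocone.mk s.pt (Discrete.natTrans fun i => s.inj i.as)
    have hc : IsColimit c := Cofan.IsColimit.mk _ (fun s => p.isColimit.desc (d s))
      (fun s i => p.isColimit.fac (d s) ⟨i⟩)
      (fun s _ hm => p.isColimit.uniq (d s) _ fun i => hm i.as)
    exact hL.coprod_mem _ _ (Cofan.isColimitEquivOfEquiv (equivShrink.{w} ι).symm c hc)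
      fun i => p.prop_diag_obj _

end IsLocalizingSub

lemma isLocalizingSub_loc (S : Set T) : IsLocalizingSub.{w} (Loc.{w} S) where
  zero_mem := fun _ hL => hL.1.zero_mem
  mem_of_iso e hX := fun L hL => hL.1.mem_of_iso e (hX L hL)
  shift_mem n _ hX := fun L hL => hL.1.shift_mem n (hX L hL)
  cone_mem Tr hT h₁ h₂ := fun L hL => hL.1.cone_mem Tr hT (h₁ L hL) (h₂ L hL)
  coprod_mem f c hc hf := fun L hL => hL.1.coprod_mem f c hc fun i => hf i L hL

lemma subset_loc (S : Set T) : S ⊆ Loc.{w} S := fun _ hX _ hL => hL.2 hX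

lemma loc_subset_iff {S L : Set T} (hL : IsLocalizingSub.{w} L) : Loc.{w} S ⊆ L ↔ S ⊆ L :=
  ⟨(subset_loc S).trans, fun h _ hX => hX L ⟨hL, h⟩⟩

end Localizing

section TrW

open Opposite Pretriangulated.Opposite

variable {T : Type*} [Category* T] [Preadditive T] [HasZeroObject T]
  [HasShift T ℤ] [∀ n : ℤ, (shiftFunctor T n).Additive] [Pretriangulated T]
  (P : ObjectProperty T) [P.IsTriangulated] [P.IsClosedUnderIsomorphisms]

lemma isStableUnderCoproductsOfShape_trW (ι : Type*) [HasCoproductsOfShape ι T]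
    [P.IsClosedUnderColimitsOfShape (Discrete ι)] : P.trW.IsStableUnderCoproductsOfShape ι := by
  refine .mk _ _ fun X Y _ _ f hf => ?_
  choose F g h hT hF using fun i => (P.trW_iff' _).1 (hf i)
  let Tr i := (triangleOpEquivalence T).functor.obj (op (Triangle.mk (g i) (f i) (h i)))
  have hTr := productTriangle_distinguished Tr fun i => op_distinguished _ (hT i)
  have e : op (∐ F) ≅ (productTriangle Tr).obj₃ := opCoproductIsoProduct F
  have comm : (opCoproductIsoProduct Y).hom ≫ Limits.Pi.map (fun i => (f i).op) =
      (Limits.Sigma.map f).op ≫ (opCoproductIsoProduct X).hom :=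
    Limits.Pi.hom_ext _ _ fun i => by simp [← op_comp]
  exact P.trW_of_op ((P.op.trW.arrow_mk_iso_iff (Arrow.isoMk (opCoproductIsoProduct Y)
    (opCoproductIsoProduct X) comm)).2 (ObjectProperty.trW.mk P.op hTr
    (P.op.prop_of_iso e (P.prop_colimit _ fun i => hF i.as))))

lemma trW_of_comp [IsTriangulated T] {X Y Z : T} (f : X ⟶ Y) (g : Y ⟶ Z)
    (hg : P.trW g) (hfg : P.trW (f ≫ g)) : P.trW f := by
  obtain ⟨Z₂₃, v₂₃, w₂₃, h₂₃, hZ₂₃⟩ := hg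
  obtain ⟨Z₁₃, v₁₃, w₁₃, h₁₃, hZ₁₃⟩ := hfg
  obtain ⟨Z₁₂, v₁₂, w₁₂, h₁₂⟩ := distinguished_cocone_triangle f
  have o := Triangulated.someOctahedron rfl h₁₂ h₂₃ h₁₃
  exact ⟨Z₁₂, v₁₂, w₁₂, h₁₂, P.ext_of_isTriangulatedClosed₁ _ o.mem hZ₁₃ hZ₂₃⟩

end TrW

section Compact

variable {T : Type u} [Category.{v} T] [Preadditive T] {X : T}

lemma cofanHomComparison_single {ι : Type w} [DecidableEq ι] {f : ι → T} (c : Cofan f) (i : ι)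
    (g : X ⟶ f i) : cofanHomComparison X f c (DFinsupp.single i g) = g ≫ c.inj i := by
  obtain rfl := Subsingleton.elim ‹DecidableEq ι› (Classical.decEq ι)
  simp [cofanHomComparison]

lemma cofanHomComparison_injective {ι : Type w} {f : ι → T} {c : Cofan f} (hc : IsColimit c) :
    Function.Injective (cofanHomComparison X f c) := by
  classical
  let π (j : ι) : c.pt ⟶ f j :=
    Cofan.IsColimit.desc hc (Pi.single (M := fun i => f i ⟶ f j) j (𝟙 (f j)))
  have comp_π (j : ι) : (Preadditive.rightComp X (π j)).comp (cofanHomComparison X f c) =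
      DFinsupp.evalAddMonoidHom j := by
    refine DFinsupp.addHom_ext fun i g => ?_
    change cofanHomComparison X f c _ ≫ π j = (DFinsupp.single i g : Π₀ i, (X ⟶ f i)) j
    rcases eq_or_ne i j with rfl | hij
    · simp [cofanHomComparison_single, π]
    · simp [cofanHomComparison_single, π, hij]
  intro φ ψ h
  ext j
  have h_comp := congrArg (Preadditive.rightComp X (π j)) h
  exact (DFunLike.congr_fun (comp_π j) φ).symm.trans
    (h_comp.trans (DFunLike.congr_fun (comp_π j) ψ))

lemma mrange_cofanHomComparison {ι : Type w} {f : ι → T} (c : Cofan f) :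
    AddMonoidHom.mrange (cofanHomComparison X f c) =
      ⨆ i, AddMonoidHom.mrange (Preadditive.rightComp X (c.inj i)) := by
  classical
  refine le_antisymm ?_ (iSup_le fun i => ?_)
  · rintro _ ⟨φ, rfl⟩
    induction φ using DFinsupp.induction with
    | h0 => simp
    | ha i g φ _ _ ih =>
      rw [map_add, cofanHomComparison_single]
      exact add_mem (AddSubmonoid.mem_iSup_of_mem i ⟨g, rfl⟩) ih
  · rintro _ ⟨g, rfl⟩
    exact ⟨DFinsupp.single i g, cofanHomComparison_single c i g⟩

lemma isCompactObj_iff : IsCompactObj.{w} X ↔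
    ∀ ⦃ι : Type w⦄ (f : ι → T) (c : Cofan f), IsColimit c →
      ⨆ i, AddMonoidHom.mrange (Preadditive.rightComp X (c.inj i)) = ⊤ :=
  forall₄_congr fun _ _ _ hc => by
    rw [← mrange_cofanHomComparison, AddMonoidHom.mrange_eq_top]
    exact and_iff_right (cofanHomComparison_injective hc)

lemma IsCompactObj.iSup_mrange_eq_top (hX : IsCompactObj.{w} X) {ι : Type*} [Small.{w} ι]
    {f : ι → T} {c : Cofan f} (hc : IsColimit c) :
    ⨆ i, AddMonoidHom.mrange (Preadditive.rightComp X (c.inj i)) = ⊤ := by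
  let e := (equivShrink.{w} ι).symm
  rw [← e.iSup_comp]
  exact isCompactObj_iff.1 hX _ _ (Cofan.isColimitEquivOfEquiv e _ hc)

end Compact

lemma distinguished_of_splitting {T : Type*} [Category* T] [Preadditive T] [HasZeroObject T]
    [HasShift T ℤ] [∀ n : ℤ, (shiftFunctor T n).Additive] [Pretriangulated T]
    {S : ShortComplex T} (s : S.Splitting) : Triangle.mk S.f S.g 0 ∈ distTriang T := by
  have hf : S.f ≫ s.isoBinaryBiproduct.hom = biprod.inl := biprod.hom_ext _ _ (by simp) (by simp)
  have hg : s.isoBinaryBiproduct.hom ≫ biprod.snd = S.g := by simp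
  exact isomorphic_distinguished _ (binaryBiproductTriangle_distinguished S.X₁ S.X₃) _
    (Triangle.isoMk _ _ (Iso.refl S.X₁) s.isoBinaryBiproduct (Iso.refl S.X₃)
      (hf.trans (Category.id_comp _).symm) ((Category.comp_id _).trans hg.symm)
      (zero_comp.trans comp_zero.symm))

section Telescope

variable {T : Type u} [Category.{v} T] [HasCoproductsOfShape ℕ T] {Z W : ℕ → T}

/-- The endomorphism of `∐ Z` moving the `n`-th summand to the `n + 1`-st one along `m n`. In a
triangulated category, the cone of `𝟙 _ - telescopeShift m` is the homotopy colimit of `m`. -/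
noncomputable def telescopeShift (m : ∀ n, Z n ⟶ Z (n + 1)) : ∐ Z ⟶ ∐ Z :=
  Sigma.desc fun n => m n ≫ Sigma.ι Z (n + 1)

@[simp]
lemma ι_telescopeShift (m : ∀ n, Z n ⟶ Z (n + 1)) (n : ℕ) :
    Sigma.ι Z n ≫ telescopeShift m = m n ≫ Sigma.ι Z (n + 1) :=
  Sigma.ι_desc _ _

lemma telescopeShift_naturality (m : ∀ n, Z n ⟶ Z (n + 1)) (m' : ∀ n, W n ⟶ W (n + 1))
    (f : ∀ n, Z n ⟶ W n) (comm : ∀ n, m n ≫ f (n + 1) = f n ≫ m' n) :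
    telescopeShift m ≫ Limits.Sigma.map f = Limits.Sigma.map f ≫ telescopeShift m' :=
  Sigma.hom_ext _ _ fun n => by
    simp [reassoc_of% ι_telescopeShift m n, reassoc_of% comm n]

variable [Preadditive T] (X : T)

lemma one_sub_telescopeShift_comp_desc :
    (𝟙 _ - telescopeShift fun _ : ℕ => 𝟙 X) ≫ (Sigma.desc fun _ => 𝟙 X) = 0 :=
  Sigma.hom_ext _ _ fun n => by
    simp [Preadditive.sub_comp, Preadditive.comp_sub, reassoc_of% ι_telescopeShift]

/-- The homotopy colimit of the constant sequence `X` is `X`, already before any triangulated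
structure enters: `𝟙 _ - telescopeShift` is a split monomorphism with cokernel `X`. -/
noncomputable def splittingOneSubTelescopeShift :
    (ShortComplex.mk _ _ (one_sub_telescopeShift_comp_desc X)).Splitting where
  r := Sigma.desc fun n => -∑ i ∈ Finset.range n, Sigma.ι (fun _ : ℕ => X) i
  s := Sigma.ι (fun _ : ℕ => X) 0
  f_r := Sigma.hom_ext _ _ fun n => by
    simp [Preadditive.sub_comp, Preadditive.comp_sub, reassoc_of% ι_telescopeShift,
      Finset.sum_range_succ]
  id := Sigma.hom_ext _ _ fun n => by
    suffices -∑ i ∈ Finset.range n, Sigma.ι (fun _ : ℕ => X) i +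
        ∑ i ∈ Finset.range n, Sigma.ι (fun _ : ℕ => X) (i + 1) + Sigma.ι (fun _ : ℕ => X) 0 =
          Sigma.ι (fun _ : ℕ => X) n by
      simpa [Preadditive.comp_sub, Preadditive.sum_comp]
    rw [add_assoc, ← Finset.sum_range_succ', Finset.sum_range_succ, neg_add_cancel_left]

variable [HasZeroObject T] [HasShift T ℤ] [∀ n : ℤ, (shiftFunctor T n).Additive]
  [Pretriangulated T] (P : ObjectProperty T) [P.IsClosedUnderIsomorphisms]

lemma trW_one_sub_telescopeShift_iff :
    P.trW (𝟙 _ - telescopeShift fun _ : ℕ => 𝟙 X) ↔ P X :=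
  P.trW_iff_of_distinguished _ (distinguished_of_splitting (splittingOneSubTelescopeShift X))

end Telescope

section Ghost

variable {T : Type u} [Category.{v} T] [Preadditive T]

/-- A family `G` of objects closed under shifts, compact, and detecting zero objects. Closure
under shifts saves us from testing against `(G i)⟦n⟧` everywhere. -/
structure IsCompactGeneratingFamily [HasShift T ℤ] {κ : Type*} (G : κ → T) : Prop where
  exists_iso_shift : ∀ i (n : ℤ), ∃ j, Nonempty (G j ≅ (G i)⟦n⟧)
  isCompactObj : ∀ i, IsCompactObj.{w} (G i)
  isZero : ∀ ⦃X : T⦄, (∀ i (x : G i ⟶ X), x = 0) → IsZero X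

/-- A morphism is a ghost for the family `G` if it induces zero on all `Hom(G i, -)`. -/
def IsGhost {κ : Type*} (G : κ → T) {X Y : T} (f : X ⟶ Y) : Prop :=
  ∀ i (x : G i ⟶ X), x ≫ f = 0

variable {κ : Type*} {G : κ → T}

lemma isGhost_telescopeShift [HasCoproductsOfShape ℕ T] (hG : ∀ i, IsCompactObj.{w} (G i))
    {Z : ℕ → T} {m : ∀ n, Z n ⟶ Z (n + 1)} (hm : ∀ n, IsGhost G (m n)) :
    IsGhost G (telescopeShift m) := fun i x => by
  have le : ⨆ n, AddMonoidHom.mrange (Preadditive.rightComp (G i) (Sigma.ι Z n)) ≤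
      AddMonoidHom.mker (Preadditive.rightComp (G i) (telescopeShift m)) := by
    refine iSup_le fun n => ?_
    rintro _ ⟨y, rfl⟩
    change (y ≫ Sigma.ι Z n) ≫ telescopeShift m = 0
    rw [Category.assoc, ι_telescopeShift, reassoc_of% hm n i y, zero_comp]
  exact le (((hG i).iSup_mrange_eq_top (coproductIsCoproduct Z)).ge (AddSubmonoid.mem_top x))

variable [HasShift T ℤ]

namespace IsCompactGeneratingFamily

variable (hG : IsCompactGeneratingFamily.{w} G)
include hG

lemma exists_shift_iso (i : κ) (n : ℤ) : ∃ j, Nonempty ((G j)⟦n⟧ ≅ G i) := by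
  obtain ⟨j, ⟨e⟩⟩ := hG.exists_iso_shift i (-n)
  exact ⟨j, ⟨(shiftFunctor T n).mapIso e ≪≫ (shiftEquiv T n).counitIso.app (G i)⟩⟩

variable [HasZeroObject T] [∀ n : ℤ, (shiftFunctor T n).Additive] [Pretriangulated T]

lemma isIso_of_bijective {X Y : T} {f : X ⟶ Y}
    (hf : ∀ i, Function.Bijective fun x : G i ⟶ X => x ≫ f) : IsIso f := by
  obtain ⟨Z, g, h, hT⟩ := distinguished_cocone_triangle f
  have hfg : f ≫ g = 0 := comp_distTriang_mor_zero₁₂ _ hT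
  have hhf : h ≫ f⟦(1 : ℤ)⟧' = 0 := comp_distTriang_mor_zero₃₁ _ hT
  suffices ∀ i (z : G i ⟶ Z), z = 0 from (Triangle.isZero₃_iff_isIso₁ _ hT).1 (hG.isZero this)
  intro i z
  obtain ⟨j, ⟨e⟩⟩ := hG.exists_shift_iso i 1
  obtain ⟨x, hx⟩ := (shiftFunctor T (1 : ℤ)).map_surjective (e.hom ≫ z ≫ h)
  have hx₀ : x = 0 := (hf j).1 <| (shiftFunctor T (1 : ℤ)).map_injective <| by simp [hx, hhf]
  have hz : z ≫ h = 0 := by simpa [hx₀] using hx.symm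
  obtain ⟨(y : G i ⟶ Y), (hy : z = y ≫ g)⟩ := Triangle.coyoneda_exact₃ _ hT z hz
  obtain ⟨x', rfl : x' ≫ f = y⟩ := (hf i).2 y
  rw [hy, Category.assoc, hfg, comp_zero]

lemma isIso_one_sub {X : T} {f : X ⟶ X} (hf : IsGhost G f) : IsIso (𝟙 X - f) :=
  hG.isIso_of_bijective fun i => by
    convert Function.bijective_id with x
    simp [Preadditive.comp_sub, hf i x]

variable [IsTriangulated T] [HasCoproductsOfShape ℕ T] {P : ObjectProperty T}
  [P.IsTriangulated] [P.IsClosedUnderIsomorphisms] [P.IsClosedUnderColimitsOfShape (Discrete ℕ)]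

lemma prop_of_ghost_tower {X : T} {Y : ℕ → T} (f : ∀ n, X ⟶ Y n) (p : ∀ n, Y n ⟶ Y (n + 1))
    (comm : ∀ n, f n ≫ p n = f (n + 1)) (hf : ∀ n, P.trW (f n)) (hp : ∀ n, IsGhost G (p n)) :
    P X := by
  have := hG.isIso_one_sub (isGhost_telescopeShift hG.isCompactObj hp)
  have := isStableUnderCoproductsOfShape_trW P ℕ
  have hf' : P.trW (Limits.Sigma.map f) := P.trW.colimMap _ fun n => hf n.as
  have comm' : (𝟙 _ - telescopeShift fun _ : ℕ => 𝟙 X) ≫ Limits.Sigma.map f =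
      Limits.Sigma.map f ≫ (𝟙 _ - telescopeShift p) := by
    simp [Preadditive.sub_comp, Preadditive.comp_sub,
      telescopeShift_naturality (fun _ => 𝟙 X) p f (by simp [comm])]
  rw [← trW_one_sub_telescopeShift_iff X P]
  refine trW_of_comp P _ _ hf' ?_
  rw [comm']
  exact P.trW.comp_mem _ _ hf' (P.trW_of_isIso _)

lemma prop_of_exists_ghost {Q : ObjectProperty T}
    (hQ : ∀ Y, Q Y → ∃ (Y' : T) (p : Y ⟶ Y'), Q Y' ∧ IsGhost G p ∧ P.trW p) : Q ≤ P := by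
  intro X hX
  choose Y' p hY' hghost htrW using hQ
  let tower : ℕ → {A : Σ Y, X ⟶ Y // Q A.1 ∧ P.trW A.2} :=
    Nat.rec ⟨⟨X, 𝟙 X⟩, hX, P.trW_of_isIso _⟩ fun _ A =>
      ⟨⟨Y' _ A.2.1, A.1.2 ≫ p _ A.2.1⟩, hY' _ _, P.trW.comp_mem _ _ A.2.2 (htrW _ _)⟩
  exact hG.prop_of_ghost_tower (fun n => (tower n).1.2) (fun n => p _ (tower n).2.1)
    (fun _ => rfl) (fun n => (tower n).2.2) (fun n => hghost _ _)

end IsCompactGeneratingFamily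

end Ghost

section PowTorsion

variable {R : Type*} [CommRing R]

/-- The submodule of the elements on which every element of `I` acts locally nilpotently. For a
finitely generated ideal these are the elements killed by a power of `I`, but for general `I`
the present notion is the one for which `powTorsion_sup` holds. -/
def powTorsion (I : Ideal R) (M : Type*) [AddCommGroup M] [Module R M] : Submodule R M where
  carrier := {x | I ≤ (Ideal.torsionOf R M x).radical}
  zero_mem' := by simp [Ideal.radical_top]
  add_mem' {x y} (hx : I ≤ _) (hy : I ≤ _) := by
    refine (le_inf hx hy).trans ?_
    rw [← Ideal.radical_inf]
    refine Ideal.radical_mono fun a ha => ?_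
    simp_all [Ideal.mem_torsionOf_iff]
  smul_mem' r x hx := hx.trans <| Ideal.radical_mono fun a ha => by
    simp_all [Ideal.mem_torsionOf_iff, smul_comm a r]

variable {M N : Type*} [AddCommGroup M] [Module R M] [AddCommGroup N] [Module R N] {I J : Ideal R}

lemma mem_powTorsion_iff {x : M} : x ∈ powTorsion I M ↔ ∀ a ∈ I, ∃ n : ℕ, a ^ n • x = 0 :=
  Iff.rfl

lemma powTorsion_sup : powTorsion (I ⊔ J) M = powTorsion I M ⊓ powTorsion J M :=
  Submodule.ext fun x => sup_le_iff (c := (Ideal.torsionOf R M x).radical)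

lemma map_mem_powTorsion (f : M →ₗ[R] N) {x : M} (hx : x ∈ powTorsion I M) :
    f x ∈ powTorsion I N :=
  hx.trans <| Ideal.radical_mono fun a ha => by
    simp_all [Ideal.mem_torsionOf_iff, ← map_smul]

lemma mem_powTorsion_of_map_mem {f : M →ₗ[R] N} (hf : LinearMap.ker f ≤ powTorsion I M) {x : M}
    (hx : f x ∈ powTorsion I N) : x ∈ powTorsion I M := by
  rw [mem_powTorsion_iff] at hx ⊢
  intro a ha
  obtain ⟨m, hm⟩ := hx a ha
  obtain ⟨n, hn⟩ := mem_powTorsion_iff.1 (hf (x := a ^ m • x) (by simpa using hm)) a ha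
  exact ⟨n + m, by rwa [pow_add, mul_smul]⟩

lemma powTorsion_span_singleton (b : R) (x : M) :
    x ∈ powTorsion (Ideal.span {b}) M ↔ ∃ n : ℕ, b ^ n • x = 0 :=
  (Ideal.span_singleton_le_iff_mem _)

lemma exists_pow_le_torsionOf (hI : I.FG) {x : M} (hx : x ∈ powTorsion I M) :
    ∃ n : ℕ, I ^ n ≤ Ideal.torsionOf R M x :=
  Ideal.exists_pow_le_of_le_radical_of_fg hx hI

end PowTorsion

section TorsionObjects

variable {R : Type*} [CommRing R] {T : Type u} [Category.{v} T] [Preadditive T] [Linear R T]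
  {κ : Type*} (G : κ → T) {I J : Ideal R}

/-- The objects all of whose generalized elements `G i ⟶ Y` are `I`-power torsion. For the family
of shifts of `R` in `D(R)` this says that the cohomology of `Y` is `I`-power torsion. -/
def torsionObjects (I : Ideal R) : Set T :=
  {Y | ∀ i (x : G i ⟶ Y), x ∈ powTorsion I (G i ⟶ Y)}

lemma torsionObjects_sup :
    torsionObjects G (I ⊔ J) = torsionObjects G I ∩ torsionObjects G J :=
  Set.ext fun Y => by simp [torsionObjects, powTorsion_sup, forall_and]

lemma mem_torsionObjects_of_id_mem {K : T}
    (hK : 𝟙 K ∈ powTorsion I (K ⟶ K)) : K ∈ torsionObjects G I := fun i x => by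
  simpa using map_mem_powTorsion (Linear.leftComp R K x) hK

variable [HasZeroObject T] [HasShift T ℤ] [∀ n : ℤ, (shiftFunctor T n).Additive]
  [Pretriangulated T] [∀ n : ℤ, (shiftFunctor T n).Linear R]

variable {G}

lemma IsCompactGeneratingFamily.isLocalizingSub_torsionObjects
    (hG : IsCompactGeneratingFamily.{w} G) (I : Ideal R) :
    IsLocalizingSub.{w} (torsionObjects G I) := by
  have shift_mem (n : ℤ) {Y : T} (hY : Y ∈ torsionObjects G I) : Y⟦n⟧ ∈ torsionObjects G I := by
    intro i x
    obtain ⟨j, ⟨e⟩⟩ := hG.exists_shift_iso i n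
    obtain ⟨y, hy⟩ := (shiftFunctor T n).map_surjective (e.hom ≫ x)
    rw [← e.inv_hom_id_assoc x, ← hy]
    exact map_mem_powTorsion (Linear.leftComp R _ e.inv)
      (map_mem_powTorsion ((shiftFunctor T n).mapLinearMap R) (hY j y))
  constructor
  case zero_mem => exact fun i x => by simp [(isZero_zero T).eq_of_tgt x 0]
  case mem_of_iso =>
    intro Y Y' e hY i x
    rw [← Category.comp_id x, ← e.inv_hom_id, ← Category.assoc]
    exact map_mem_powTorsion (Linear.rightComp R _ e.hom) (hY i _)
  case shift_mem => exact fun n _ hY => shift_mem n hY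
  case cone_mem =>
    intro Tr hTr h₁ h₂ i x
    refine mem_powTorsion_of_map_mem (f := Linear.rightComp R _ Tr.mor₃) ?_ (shift_mem 1 h₁ i _)
    intro y hy
    obtain ⟨z, rfl⟩ := Triangle.coyoneda_exact₃ _ hTr y hy
    exact map_mem_powTorsion (Linear.rightComp R _ Tr.mor₂) (h₂ i z)
  case coprod_mem =>
    intro ι Y c hc hY i x
    have le : ⨆ k, AddMonoidHom.mrange (Preadditive.rightComp (G i) (c.inj k)) ≤
        (powTorsion I (G i ⟶ c.pt)).toAddSubmonoid := by
      refine iSup_le fun k => ?_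
      rintro _ ⟨y, rfl⟩
      exact map_mem_powTorsion (Linear.rightComp R _ (c.inj k)) (hY k i y)
    exact le (((hG.isCompactObj i).iSup_mrange_eq_top hc).ge (AddSubmonoid.mem_top x))

end TorsionObjects

section IdTorsion

variable {R : Type*} [CommRing R] {I : Ideal R} {C D : Type*} [Category* C] [Preadditive C]
  [Linear R C] [Category* D] [Preadditive D] [Linear R D]

lemma id_mem_powTorsion_of_iso {X Y : C} (e : X ≅ Y) (hX : 𝟙 X ∈ powTorsion I (X ⟶ X)) :
    𝟙 Y ∈ powTorsion I (Y ⟶ Y) := by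
  have : e.inv ≫ 𝟙 X ≫ e.hom ∈ powTorsion I (Y ⟶ Y) :=
    map_mem_powTorsion (Linear.leftComp R _ e.inv)
      (map_mem_powTorsion (Linear.rightComp R _ e.hom) hX)
  simpa using this

variable (F : C ⥤ D) [F.Additive] [F.Linear R]

lemma id_obj_mem_powTorsion {X : C} (hX : 𝟙 X ∈ powTorsion I (X ⟶ X)) :
    𝟙 (F.obj X) ∈ powTorsion I (F.obj X ⟶ F.obj X) := by
  simpa using map_mem_powTorsion (F.mapLinearMap R) hX

lemma id_mem_powTorsion_of_id_obj_mem [F.Faithful] {X : C}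
    (hX : 𝟙 (F.obj X) ∈ powTorsion I (F.obj X ⟶ F.obj X)) : 𝟙 X ∈ powTorsion I (X ⟶ X) := by
  refine mem_powTorsion_of_map_mem (f := F.mapLinearMap R) ?_ (by simpa using hX)
  rw [LinearMap.ker_eq_bot.2 F.map_injective]
  exact bot_le

end IdTorsion

section Koszul

variable {R : Type*} [CommRing R] {T : Type u} [Category.{v} T] [Preadditive T] [Linear R T]
  [HasZeroObject T] [HasShift T ℤ] [∀ n : ℤ, (shiftFunctor T n).Additive] [Pretriangulated T]
  {I J : Ideal R}

lemma id_mem_powTorsion_of_distTriang {X Y Z : T} {f : X ⟶ Y} {g : Y ⟶ Z} {h : Z ⟶ X⟦(1 : ℤ)⟧}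
    (hT : Triangle.mk f g h ∈ distTriang T) (hg : g ∈ powTorsion I (Y ⟶ Z))
    (hh : h ∈ powTorsion I (Z ⟶ X⟦(1 : ℤ)⟧)) : 𝟙 Z ∈ powTorsion I (Z ⟶ Z) := by
  refine mem_powTorsion_of_map_mem (f := Linear.leftComp R Z g) ?_ (by simpa using hg)
  intro φ hφ
  obtain ⟨ψ, rfl⟩ := Triangle.yoneda_exact₃ _ hT φ hφ
  exact map_mem_powTorsion (Linear.rightComp R Z ψ) hh

variable [∀ n : ℤ, (shiftFunctor T n).Linear R]

/-- The objects all of whose morphisms to objects of `S` are `I`-power torsion. -/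
def homTorsion (I : Ideal R) (S : Set T) : ObjectProperty T :=
  fun K => ∀ Y ∈ S, ∀ f : K ⟶ Y, f ∈ powTorsion I (K ⟶ Y)

lemma isTriangulated_homTorsion {S : Set T} (hS : ∀ (n : ℤ), ∀ Y ∈ S, Y⟦n⟧ ∈ S) :
    (homTorsion I S).IsTriangulated where
  exists_zero := ⟨0, isZero_zero T, fun Y _ f => by simp [(isZero_zero T).eq_of_src f 0]⟩
  isStableUnderShiftBy n := .mk fun K hK Y hY f => by
    let e : (Y⟦-n⟧)⟦n⟧ ≅ Y := (shiftEquiv T n).counitIso.app Y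
    obtain ⟨g, hg⟩ := (shiftFunctor T n).map_surjective (f ≫ e.inv)
    rw [← Category.comp_id f, ← e.inv_hom_id, ← Category.assoc, ← hg]
    exact map_mem_powTorsion (Linear.rightComp R _ e.hom)
      (map_mem_powTorsion ((shiftFunctor T n).mapLinearMap R) (hK _ (hS (-n) Y hY) g))
  ext₂' Tr hTr h₁ h₃ := ⟨Tr.obj₂, fun Y hY f => by
    refine mem_powTorsion_of_map_mem (f := Linear.leftComp R _ Tr.mor₁) ?_ (h₁ Y hY _)
    intro g hg
    obtain ⟨h, rfl⟩ := Triangle.yoneda_exact₂ _ hTr g hg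
    exact map_mem_powTorsion (Linear.leftComp R _ Tr.mor₂) (h₃ Y hY h), ⟨Iso.refl _⟩⟩

instance (S : Set T) : (homTorsion I S).IsClosedUnderIsomorphisms where
  of_iso e hK Y hY f := by
    rw [← Category.id_comp f, ← e.inv_hom_id, Category.assoc]
    exact map_mem_powTorsion (Linear.leftComp R _ e.inv) (hK Y hY _)

-- Iterating the cone of a power of `b` over generators `b` of `J` is the construction of a Koszul
-- complex.
lemma exists_factor_of_powTorsion (hJ : J.FG) (P : ObjectProperty T) [P.IsTriangulatedClosed₃]
    [P.IsClosedUnderIsomorphisms] {Y : T} (hP : ∀ K, P K → ∀ f : K ⟶ Y, f ∈ powTorsion J _)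
    {X : T} (hX : P X) (y : X ⟶ Y) :
    ∃ (K : T) (q : X ⟶ K) (z : K ⟶ Y), P K ∧ q ≫ z = y ∧ 𝟙 K ∈ powTorsion J _ ∧
      ∀ I : Ideal R, 𝟙 X ∈ powTorsion I _ → 𝟙 K ∈ powTorsion I _ := by
  induction J, hJ using Submodule.fg_induction generalizing X with
  | singleton b =>
    obtain ⟨n, hn⟩ := (powTorsion_span_singleton b y).1 (hP X hX y)
    obtain ⟨K, q, δ, hT⟩ := distinguished_cocone_triangle (b ^ n • 𝟙 X)
    have hbq : (b ^ n • 𝟙 X) ≫ q = 0 := comp_distTriang_mor_zero₁₂ _ hT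
    have hδb : δ ≫ (b ^ n • 𝟙 X)⟦(1 : ℤ)⟧' = 0 := comp_distTriang_mor_zero₃₁ _ hT
    have hby : (b ^ n • 𝟙 X) ≫ y = 0 := by simpa [Linear.smul_comp] using hn
    obtain ⟨z, hz⟩ : ∃ z : K ⟶ Y, y = q ≫ z :=
      Triangle.yoneda_exact₂ _ hT y hby
    refine ⟨K, q, z, P.ext_of_isTriangulatedClosed₃ _ hT hX hX, hz.symm, ?_, fun I hI => ?_⟩
    · refine id_mem_powTorsion_of_distTriang hT ((powTorsion_span_singleton b q).2 ⟨n, ?_⟩)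
        ((powTorsion_span_singleton b δ).2 ⟨n, ?_⟩)
      · simpa [Linear.smul_comp] using hbq
      · simpa [Functor.map_smul] using hδb
    · refine id_mem_powTorsion_of_distTriang hT ?_ ?_
      · simpa using map_mem_powTorsion (Linear.rightComp R X q) hI
      · simpa using map_mem_powTorsion (Linear.leftComp R _ δ)
          (map_mem_powTorsion ((shiftFunctor T (1 : ℤ)).mapLinearMap R) hI)
  | sup J₁ J₂ _ _ ih₁ ih₂ =>
    simp only [powTorsion_sup, Submodule.mem_inf] at hP ⊢
    obtain ⟨K₁, q₁, z₁, hK₁, rfl, h₁, hI₁⟩ := ih₁ (fun K hK f => (hP K hK f).1) hX y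
    obtain ⟨K₂, q₂, z₂, hK₂, rfl, h₂, hI₂⟩ := ih₂ (fun K hK f => (hP K hK f).2) hK₁ z₁
    exact ⟨K₂, q₁ ≫ q₂, z₂, hK₂, Category.assoc _ _ _, ⟨hI₂ J₁ h₁, h₂⟩,
      fun I hI => hI₂ I (hI₁ I hI)⟩

theorem IsCompactGeneratingFamily.torsionObjects_subset [IsTriangulated T] [HasCoproducts.{w} T]
    {κ : Type*} [Small.{w} κ] {G : κ → T} [∀ i Y, Small.{w} (G i ⟶ Y)]
    (hG : IsCompactGeneratingFamily.{w} G) (hI : I.FG) (B : ObjectProperty T) [B.IsTriangulated]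
    [B.IsClosedUnderIsomorphisms] (hB : ∀ i, B (G i)) {L : Set T} (hL : IsLocalizingSub.{w} L)
    (hBL : ∀ K, B K → 𝟙 K ∈ powTorsion I (K ⟶ K) → K ∈ L) : torsionObjects G I ⊆ L := by
  have hS := hG.isLocalizingSub_torsionObjects I
  have := isTriangulated_homTorsion (I := I) fun n Y hY => hS.shift_mem n hY
  have := hL.isTriangulated
  have := hL.isClosedUnderIsomorphisms
  have := hL.isClosedUnderColimitsOfShape_discrete ℕ
  have := hasCoproductsOfShape_of_small.{w} T ℕ
  refine hG.prop_of_exists_ghost (P := (· ∈ L)) (Q := (· ∈ torsionObjects G I)) fun Y hY => ?_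
  let β := Σ i, (G i ⟶ Y)
  choose K q z hK hqz hKI using fun x : β => exists_factor_of_powTorsion hI
    (B ⊓ homTorsion I (torsionObjects G I)) (fun K hK f => hK.2 Y hY f)
    ⟨hB x.1, fun Y hY f => hY x.1 f⟩ x.2
  have := hasCoproductsOfShape_of_small.{w} T β
  have := hL.isClosedUnderColimitsOfShape_discrete β
  have := hS.isClosedUnderColimitsOfShape_discrete β
  have hKL : ∐ K ∈ L := ObjectProperty.prop_colimit (· ∈ L) _ fun x =>
    hBL _ (hK x.as).1 (hKI x.as).1
  have hKS : ∐ K ∈ torsionObjects G I :=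
    ObjectProperty.prop_colimit (· ∈ torsionObjects G I) _ fun x =>
      mem_torsionObjects_of_id_mem G (hKI x.as).1
  obtain ⟨Y', p, δ, hT⟩ := distinguished_cocone_triangle (Sigma.desc z)
  have hp : Sigma.desc z ≫ p = 0 := comp_distTriang_mor_zero₁₂ _ hT
  refine ⟨Y', p, hS.cone_mem _ hT hKS hY, fun i x => ?_, .mk' _ hT hKL⟩
  have hx : q ⟨i, x⟩ ≫ z ⟨i, x⟩ = x := hqz ⟨i, x⟩
  rw [← hx, ← Sigma.ι_desc z ⟨i, x⟩, Category.assoc, Category.assoc, hp, comp_zero, comp_zero]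

end Koszul

section CoproductsOfEssSurj

variable {C D : Type*} [Category* C] [Category* D] (L : C ⥤ D) {ι : Type*}

lemma preservesCoproductsOfShape_of_existsUnique [HasCoproductsOfShape ι C]
    (h : ∀ (X : ι → C) (Z : D) (a : ∀ i, L.obj (X i) ⟶ Z),
      ∃! d : L.obj (∐ X) ⟶ Z, ∀ i, L.map (Sigma.ι X i) ≫ d = a i) :
    PreservesColimitsOfShape (Discrete ι) L :=
  have (X : ι → C) : PreservesColimit (Discrete.functor X) L :=
    preservesColimit_of_preserves_colimit_cocone (coproductIsCoproduct X) <|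
      (isColimitMapCoconeCofanMkEquiv L _ _).symm <| IsColimit.ofExistsUnique fun s => by
        obtain ⟨d, hd, d_unique⟩ := h X s.pt fun i => s.ι.app ⟨i⟩
        exact ⟨d, fun i => hd i.as, fun d' hd' => d_unique d' fun i => hd' ⟨i⟩⟩
  preservesColimitsOfShape_of_discrete L

lemma exists_iso_discreteFunctor_comp [L.EssSurj] (F : Discrete ι ⥤ D) :
    ∃ X : ι → C, Nonempty (F ≅ Discrete.functor X ⋙ L) :=
  ⟨fun i => L.objPreimage (F.obj ⟨i⟩),
    ⟨Discrete.natIso fun i => (L.objObjPreimageIso (F.obj i)).symm⟩⟩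

variable [L.EssSurj] [HasCoproductsOfShape ι C] [PreservesColimitsOfShape (Discrete ι) L]

include L in
lemma hasCoproductsOfShape_of_essSurj : HasCoproductsOfShape ι D where
  has_colimit F := by
    obtain ⟨X, ⟨e⟩⟩ := exists_iso_discreteFunctor_comp L F
    exact hasColimit_of_iso e

lemma isClosedUnderCoproductsOfShape_of_essSurj (P : ObjectProperty D)
    [P.IsClosedUnderIsomorphisms] (hP : ∀ X : ι → C, (∀ i, P (L.obj (X i))) → P (L.obj (∐ X))) :
    P.IsClosedUnderColimitsOfShape (Discrete ι) where
  colimitsOfShape_le := by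
    rintro Z ⟨p⟩
    obtain ⟨X, ⟨e⟩⟩ := exists_iso_discreteFunctor_comp L p.diag
    have hX := isColimitOfPreserves L (colimit.isColimit (Discrete.functor X))
    exact P.prop_of_iso (IsColimit.coconePointsIsoOfNatIso hX p.isColimit e.symm)
      (hP X fun i => P.prop_of_iso (e.app ⟨i⟩) (p.prop_diag_obj ⟨i⟩))

end CoproductsOfEssSurj

section LocalizationCoproducts

variable {C D : Type*} [Category* C] [Category* D] (L : C ⥤ D) (W : MorphismProperty C)
  [L.IsLocalization W] [W.HasRightCalculusOfFractions] {ι : Type*} [HasCoproductsOfShape ι C]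
  [W.IsStableUnderCoproductsOfShape ι] {X : ι → C} {Z : D}

include W in
lemma exists_sigma_desc_of_isLocalization (a : ∀ i, L.obj (X i) ⟶ Z) :
    ∃ d : L.obj (∐ X) ⟶ Z, ∀ i, L.map (Sigma.ι X i) ≫ d = a i := by
  have := Localization.essSurj L W
  let e := L.objObjPreimageIso Z
  choose φ hφ using fun i => Localization.exists_rightFraction L W (a i ≫ e.inv)
  let s := Limits.Sigma.map fun i => (φ i).s
  have hs : W s := W.colimMap _ fun i => (φ i.as).hs
  have := Localization.inverts L W _ hs
  refine ⟨inv (L.map s) ≫ L.map (Sigma.desc fun i => (φ i).f) ≫ e.hom, fun i => ?_⟩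
  have := Localization.inverts L W _ (φ i).hs
  have ι_s : L.map (φ i).s ≫ L.map (Sigma.ι X i) = L.map (Sigma.ι _ i) ≫ L.map s := by
    rw [← L.map_comp, ← L.map_comp, Sigma.ι_map]
  have s_a : L.map (φ i).s ≫ a i = L.map (φ i).f ≫ e.hom := by
    rw [← (φ i).map_s_comp_map L (Localization.inverts L W), ← hφ, Category.assoc,
      Category.assoc, e.inv_hom_id, Category.comp_id]
  rw [← cancel_epi (L.map (φ i).s), s_a, reassoc_of% ι_s, IsIso.hom_inv_id_assoc,
    ← L.map_comp_assoc, Sigma.ι_desc]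

include W in
lemma sigma_map_hom_ext_of_isLocalization {Y : C} {f f' : ∐ X ⟶ Y}
    (h : ∀ i, L.map (Sigma.ι X i ≫ f) = L.map (Sigma.ι X i ≫ f')) : L.map f = L.map f' := by
  choose X' t ht comm using fun i => (MorphismProperty.map_eq_iff_precomp L W _ _).1 (h i)
  exact (MorphismProperty.map_eq_iff_precomp L W _ _).2
    ⟨∐ X', Limits.Sigma.map t, W.colimMap _ fun i => ht i.as, by ext i; simp [comm]⟩

variable [W.HasLeftCalculusOfFractions]

include W in
lemma sigma_hom_ext_of_isLocalization {g g' : L.obj (∐ X) ⟶ Z}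
    (h : ∀ i, L.map (Sigma.ι X i) ≫ g = L.map (Sigma.ι X i) ≫ g') : g = g' := by
  have := Localization.essSurj L W
  let e := L.objObjPreimageIso Z
  obtain ⟨φ, hg, hg'⟩ := Localization.exists_leftFraction₂ L W (g ≫ e.inv) (g' ≫ e.inv)
  have g_s : g ≫ e.inv ≫ L.map φ.s = L.map φ.f := by
    simpa [← hg] using φ.fst.map_comp_map_s L (Localization.inverts L W)
  have g'_s : g' ≫ e.inv ≫ L.map φ.s = L.map φ.f' := by
    simpa [← hg'] using φ.snd.map_comp_map_s L (Localization.inverts L W)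
  have f_eq : L.map φ.f = L.map φ.f' := sigma_map_hom_ext_of_isLocalization L W fun i => by
    rw [L.map_comp, L.map_comp, ← g_s, ← g'_s, reassoc_of% h i]
  rw [← cancel_mono (e.inv ≫ L.map φ.s), g_s, g'_s, f_eq]

variable (ι) in
include W in
lemma preservesCoproductsOfShape_of_isLocalization : PreservesColimitsOfShape (Discrete ι) L :=
  preservesCoproductsOfShape_of_existsUnique L fun X Z a => by
    obtain ⟨d, hd⟩ := exists_sigma_desc_of_isLocalization L W a
    exact ⟨d, hd, fun d' hd' => sigma_hom_ext_of_isLocalization L W fun i =>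
      (hd' i).trans (hd i).symm⟩

end LocalizationCoproducts

section HomotopyCategoryCoproducts

variable {C : Type*} [Category* C] [Preadditive C] {α : Type*} {c : ComplexShape α} {ι : Type*}
  [HasCoproductsOfShape ι C] {X : ι → HomologicalComplex C c} {Y : HomologicalComplex C c}

/-- The coproduct of complexes is computed degreewise. -/
noncomputable def isColimitSigmaX (X : ι → HomologicalComplex C c) (p : α) :
    IsColimit (Cofan.mk ((∐ X).X p) fun i => (Sigma.ι X i).f p) :=
  isColimitCofanMkObjOfIsColimit (HomologicalComplex.eval C c p) _ _ (coproductIsCoproduct X)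

/-- Homotopies on the summands glue to a homotopy on the coproduct. -/
noncomputable def sigmaHomotopy {f g : ∐ X ⟶ Y}
    (h : ∀ i, Homotopy (Sigma.ι X i ≫ f) (Sigma.ι X i ≫ g)) : Homotopy f g := by
  let hom (p q : α) : (∐ X).X p ⟶ Y.X q :=
    Cofan.IsColimit.desc (isColimitSigmaX X p) fun i => (h i).hom p q
  have ι_hom (i : ι) : (fun p q => (Sigma.ι X i).f p ≫ hom p q) = (h i).hom :=
    funext₂ fun p q => Cofan.IsColimit.fac (isColimitSigmaX X p) _ i
  refine { hom, zero p q hpq := ?_, comm p := ?_ }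
  · refine Cofan.IsColimit.hom_ext (isColimitSigmaX X p) _ _ fun i => ?_
    exact (congr_fun₂ (ι_hom i) p q).trans (((h i).zero p q hpq).trans comp_zero.symm)
  · refine Cofan.IsColimit.hom_ext (isColimitSigmaX X p) _ _ fun i => ?_
    have := (h i).comm p
    rw [← ι_hom, dNext_comp_left, prevD_comp_left] at this
    simpa [Preadditive.comp_add] using this

instance preservesCoproductsOfShape_quotient :
    PreservesColimitsOfShape (Discrete ι) (HomotopyCategory.quotient C c) :=
  preservesCoproductsOfShape_of_existsUnique _ fun X Z a => by
    obtain ⟨Y, rfl⟩ := HomotopyCategory.quotient_obj_surjective Z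
    choose f hf using fun i => (HomotopyCategory.quotient C c).map_surjective (a i)
    refine ⟨(HomotopyCategory.quotient C c).map (Sigma.desc f), fun i => ?_, fun d hd => ?_⟩
    · rw [← Functor.map_comp, Sigma.ι_desc, hf]
    · obtain ⟨g, rfl⟩ := (HomotopyCategory.quotient C c).map_surjective d
      refine HomotopyCategory.eq_of_homotopy _ _ (sigmaHomotopy fun i => ?_)
      exact HomotopyCategory.homotopyOfEq _ _ (by simpa [hf] using hd i)

instance hasCoproductsOfShape_homotopyCategory : HasCoproductsOfShape ι (HomotopyCategory C c) :=
  hasCoproductsOfShape_of_essSurj (HomotopyCategory.quotient C c)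

end HomotopyCategoryCoproducts

section DerivedCategoryCoproducts

lemma exact_of_evaluation {J C : Type*} [Category* J] [Category* C] [Abelian C]
    {S : ShortComplex (J ⥤ C)} (hS : ∀ j, (S.map ((evaluation J C).obj j)).Exact) : S.Exact := by
  rw [S.exact_iff_isZero_homology]
  exact Functor.isZero _ fun j => ((ShortComplex.exact_iff_isZero_homology _).1 (hS j)).of_iso
    (S.mapHomologyIso ((evaluation J C).obj j)).symm

lemma exactAt_sigma {C : Type*} [Category* C] [Abelian C] {α : Type*} {c : ComplexShape α}
    {ι : Type*} [HasCoproductsOfShape ι C] [HasExactColimitsOfShape (Discrete ι) C]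
    {X : ι → HomologicalComplex C c} {p : α} (hX : ∀ i, (X i).ExactAt p) : (∐ X).ExactAt p := by
  let S : ShortComplex (Discrete ι ⥤ C) := ShortComplex.mk
    (Discrete.natTrans fun i => (X i.as).d (c.prev p) p :
      Discrete.functor (fun i => (X i).X _) ⟶ Discrete.functor fun i => (X i).X _)
    (Discrete.natTrans fun i => (X i.as).d p (c.next p) :
      _ ⟶ Discrete.functor fun i => (X i).X _)
    (by ext; simp)
  have hS : S.Exact := exact_of_evaluation fun i => hX i.as
  exact colim.exact_mapShortComplex hS (isColimitSigmaX X _) (isColimitSigmaX X _)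
    (isColimitSigmaX X _) _ _ (fun i => (Sigma.ι X i.as).comm _ _)
    fun i => (Sigma.ι X i.as).comm _ _

variable (C : Type*) [Category* C] [Abelian C] (ι : Type*) [HasCoproductsOfShape ι C]
  [HasExactColimitsOfShape (Discrete ι) C]

instance isClosedUnderCoproductsOfShape_subcategoryAcyclic :
    (HomotopyCategory.subcategoryAcyclic C).IsClosedUnderColimitsOfShape (Discrete ι) :=
  isClosedUnderCoproductsOfShape_of_essSurj (HomotopyCategory.quotient C (ComplexShape.up ℤ)) _
    fun X hX => by
      simp only [HomotopyCategory.quotient_obj_mem_subcategoryAcyclic_iff_exactAt] at hX ⊢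
      exact fun n => exactAt_sigma fun i => hX i n

variable [HasDerivedCategory C]

instance preservesCoproductsOfShape_derivedCategoryQh :
    PreservesColimitsOfShape (Discrete ι) (DerivedCategory.Qh (C := C)) :=
  have := isStableUnderCoproductsOfShape_trW (HomotopyCategory.subcategoryAcyclic C) ι
  preservesCoproductsOfShape_of_isLocalization DerivedCategory.Qh
    (HomotopyCategory.subcategoryAcyclic C).trW ι

instance preservesCoproductsOfShape_derivedCategoryQ :
    PreservesColimitsOfShape (Discrete ι) (DerivedCategory.Q (C := C)) :=
  preservesColimitsOfShape_of_natIso (DerivedCategory.quotientCompQhIso C)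

instance hasCoproductsOfShape_derivedCategory : HasCoproductsOfShape ι (DerivedCategory C) :=
  hasCoproductsOfShape_of_essSurj DerivedCategory.Q

instance preservesCoproductsOfShape_singleFunctor (n : ℤ) :
    PreservesColimitsOfShape (Discrete ι) (DerivedCategory.singleFunctor C n) :=
  inferInstanceAs (PreservesColimitsOfShape (Discrete ι)
    (HomologicalComplex.single C (.up ℤ) n ⋙ DerivedCategory.Q))

end DerivedCategoryCoproducts

section Single

open DerivedCategory

variable {C : Type*} [Category* C] [Abelian C]

instance isKProjective_single_obj (P : C) [Projective P] (k : ℤ) :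
    CochainComplex.IsKProjective ((HomologicalComplex.single C (.up ℤ) k).obj P) :=
  have (n : ℤ) : Projective (((HomologicalComplex.single C (.up ℤ) k).obj P).X n) := by
    by_cases h : n = k
    · exact Projective.of_iso (HomologicalComplex.singleObjXIsoOfEq _ k P n h).symm ‹_›
    · exact (HomologicalComplex.isZero_single_obj_X _ k P n h).projective
  have : CochainComplex.IsStrictlyLE ((HomologicalComplex.single C (.up ℤ) k).obj P) k :=
    inferInstanceAs (((CochainComplex.singleFunctor C k).obj P).IsStrictlyLE k)
  CochainComplex.isKProjective_of_projective _ k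

variable [HasDerivedCategory C]

lemma Q_map_surjective (K L : CochainComplex C ℤ) [K.IsKProjective] :
    Function.Surjective (Q.map : (K ⟶ L) → _) := fun x => by
  obtain ⟨f, hf⟩ := (CochainComplex.IsKProjective.Qh_map_bijective K
    ((HomotopyCategory.quotient _ _).obj L)).2 x
  obtain ⟨g, rfl⟩ := (HomotopyCategory.quotient _ _).map_surjective f
  exact ⟨g, hf⟩

lemma homologyMap_eq_zero_of_Q_map {K L : CochainComplex C ℤ} {f : K ⟶ L}
    (hf : Q.map f = 0) (n : ℤ) : HomologicalComplex.homologyMap f n = 0 := by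
  refine (cancel_epi ((homologyFunctorFactors C n).hom.app K)).1 ?_
  rw [← homologyFunctorFactors_hom_naturality, hf, Functor.map_zero, zero_comp]
  exact comp_zero.symm

lemma comp_homologyπ_eq_zero {P : C} {K : CochainComplex C ℤ} {k : ℤ}
    (h : ∀ x : (singleFunctor C k).obj P ⟶ Q.obj K, x = 0) (z : P ⟶ K.cycles k) :
    z ≫ K.homologyπ k = 0 := by
  let f : (HomologicalComplex.single C (.up ℤ) k).obj P ⟶ K :=
    HomologicalComplex.mkHomFromSingle (z ≫ K.iCycles k) (by simp)
  have f_cycles : (HomologicalComplex.singleObjCyclesSelfIso _ k P).inv ≫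
      HomologicalComplex.cyclesMap f k = z := by
    simp [← cancel_mono (K.iCycles k), f]
  have f_homology : HomologicalComplex.homologyMap f k = 0 :=
    homologyMap_eq_zero_of_Q_map (h (Q.map f)) k
  rw [← f_cycles, Category.assoc, ← HomologicalComplex.homologyπ_naturality, f_homology,
    comp_zero, comp_zero]

lemma isZero_homologyFunctor_obj_of_isSeparator {P : C} (hP : IsSeparator P)
    {Y : DerivedCategory C} {k : ℤ} (hY : ∀ x : (singleFunctor C k).obj P ⟶ Y, x = 0) :
    IsZero ((homologyFunctor C k).obj Y) := by
  let K := Q.objPreimage Y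
  let e : Q.obj K ≅ Y := Q.objObjPreimageIso Y
  suffices 𝟙 (K.homology k) = 0 from ((IsZero.iff_id_eq_zero _).2 this).of_iso
    ((homologyFunctor C k).mapIso e.symm ≪≫ (homologyFunctorFactors C k).app K)
  suffices K.homologyπ k = 0 by rw [← cancel_epi (K.homologyπ k), this, zero_comp, zero_comp]
  refine (isSeparator_def _).1 hP _ _ fun z => ?_
  rw [comp_zero]
  exact comp_homologyπ_eq_zero (fun x => (cancel_mono e.hom).1 ((hY _).trans zero_comp.symm)) z

lemma isZero_of_isZero_homologyFunctor_obj {Y : DerivedCategory C}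
    (hY : ∀ k, IsZero ((homologyFunctor C k).obj Y)) : IsZero Y :=
  have : Y.IsLE 0 := (isLE_iff Y 0).2 fun k _ => hY k
  have : Y.IsGE 1 := (isGE_iff Y 1).2 fun k _ => hY k
  TStructure.t.isZero Y 0 1

lemma small_singleFunctor_obj_hom [LocallySmall.{w} C] (P : C) [Projective P] (k : ℤ)
    (Y : DerivedCategory C) :
    Small.{w} ((singleFunctor C k).obj P ⟶ Y) := by
  let K := Q.objPreimage Y
  let e : Q.obj K ≅ Y := Q.objObjPreimageIso Y
  let P' := (HomologicalComplex.single C (.up ℤ) k).obj P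
  have : Small.{w} (P' ⟶ K) := small_of_injective
    (f := fun g => (HomologicalComplex.singleObjXSelf _ k P).inv ≫ g.f k) fun g g' h =>
      HomologicalComplex.from_single_hom_ext ((cancel_epi _).1 h)
  refine small_of_surjective (f := fun g : P' ⟶ K => Q.map g ≫ e.hom) fun x => ?_
  obtain ⟨g, hg⟩ := Q_map_surjective P' K (x ≫ e.inv)
  exact ⟨g, (Iso.eq_comp_inv e).1 hg⟩

lemma exists_comp_singleFunctor_map_eq {P A B : C} [Projective P] (φ : A ⟶ B) [Epi φ] {k n : ℤ}
    (x : (singleFunctor C k).obj P ⟶ (singleFunctor C n).obj B) :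
    ∃ y : (singleFunctor C k).obj P ⟶ (singleFunctor C n).obj A,
      y ≫ (singleFunctor C n).map φ = x := by
  let K (M : C) : CochainComplex C ℤ := (HomologicalComplex.single C (.up ℤ) n).obj M
  let f : K A ⟶ K B := (HomologicalComplex.single C (.up ℤ) n).map φ
  obtain ⟨g, rfl⟩ := Q_map_surjective ((HomologicalComplex.single C (.up ℤ) k).obj P) (K B) x
  let b : P ⟶ (K B).X k := (HomologicalComplex.singleObjXSelf _ k P).inv ≫ g.f k
  let a : P ⟶ (K A).X k := Projective.factorThru b (f.f k)
  let h : (HomologicalComplex.single C (.up ℤ) k).obj P ⟶ K A :=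
    HomologicalComplex.mkHomFromSingle a (by simp [K])
  have : h ≫ f = g := by
    apply HomologicalComplex.from_single_hom_ext
    simp [h, a, b]
  exact ⟨Q.map h, (Q.map_comp h f).symm.trans (congrArg _ this)⟩

end Single

section CompactSingle

open DerivedCategory

lemma IsCompactObj.exists_eq_sum_comp {T : Type u} [Category.{v} T] [Preadditive T] {X : T}
    (hX : IsCompactObj.{w} X) {ι : Type w} [DecidableEq ι] {f : ι → T} {c : Cofan f}
    (hc : IsColimit c) (e : ι → (c.pt ⟶ c.pt))
    (he : ∀ i j, c.inj i ≫ e j = if i = j then c.inj i else 0) (x : X ⟶ c.pt) :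
    ∃ s : Finset ι, x = ∑ j ∈ s, x ≫ e j := by
  classical
  obtain ⟨φ, rfl⟩ := (hX f c hc).2 x
  have eq_sum : cofanHomComparison X f c φ = ∑ i ∈ φ.support, φ i ≫ c.inj i := by
    conv_lhs => rw [← DFinsupp.sum_single (f := φ), DFinsupp.sum, map_sum]
    exact Finset.sum_congr rfl fun i _ => cofanHomComparison_single c i (φ i)
  refine ⟨φ.support, ?_⟩
  rw [eq_sum]
  refine Finset.sum_congr rfl fun j hj => ?_
  simp [Preadditive.sum_comp, he, comp_ite, hj]

lemma isCompactObj_of_essSurj {C : Type*} [Category* C] {D : Type u} [Category.{v} D]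
    [Preadditive D] [HasCoproducts.{w} C] (L : C ⥤ D) [L.EssSurj]
    [∀ ι : Type w, PreservesColimitsOfShape (Discrete ι) L] {X : D}
    (hX : ∀ ⦃ι : Type w⦄ (Y : ι → C),
      ⨆ i, AddMonoidHom.mrange (Preadditive.rightComp X (L.map (Sigma.ι Y i))) = ⊤) :
    IsCompactObj.{w} X := by
  refine isCompactObj_iff.2 fun ι f c hc => ?_
  let Y (i : ι) : C := L.objPreimage (f i)
  let a (i : ι) : L.obj (Y i) ≅ f i := L.objObjPreimageIso (f i)
  have hY := isColimitOfPreserves L (colimit.isColimit (Discrete.functor Y))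
  let α : Discrete.functor Y ⋙ L ≅ Discrete.functor f := Discrete.natIso fun i => a i.as
  let e : L.obj (∐ Y) ≅ c.pt := hY.coconePointsIsoOfNatIso hc α
  have ι_e (i : ι) : L.map (Sigma.ι Y i) ≫ e.hom = (a i).hom ≫ c.inj i :=
    hY.comp_coconePointsIsoOfNatIso_hom hc α ⟨i⟩
  have le : ⨆ i, AddMonoidHom.mrange (Preadditive.rightComp X (L.map (Sigma.ι Y i))) ≤
      (⨆ i, AddMonoidHom.mrange (Preadditive.rightComp X (c.inj i))).comap
        (Preadditive.rightComp X e.hom) := by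
    refine iSup_le fun i => ?_
    rintro _ ⟨x, rfl⟩
    refine AddSubmonoid.mem_iSup_of_mem i ⟨x ≫ (a i).hom, ?_⟩
    change (x ≫ (a i).hom) ≫ c.inj i = (x ≫ L.map (Sigma.ι Y i)) ≫ e.hom
    rw [Category.assoc, Category.assoc, ι_e]
  refine eq_top_iff.2 fun x _ => ?_
  rw [← Category.comp_id x, ← e.inv_hom_id, ← Category.assoc]
  exact le ((hX Y).ge (AddSubmonoid.mem_top (x ≫ e.inv)))

lemma exists_eq_sum_comp_of_single {C : Type*} [Category* C] [Preadditive C] [HasZeroObject C]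
    [HasCoproducts.{w} C] {P : C} (hP : IsCompactObj.{w} P) {α : Type*} [DecidableEq α]
    {c : ComplexShape α} {ι : Type w} [DecidableEq ι] {X : ι → HomologicalComplex C c} {k : α}
    (g : (HomologicalComplex.single C c k).obj P ⟶ ∐ X) :
    ∃ s : Finset ι, g = ∑ i ∈ s, g ≫ Sigma.π X i ≫ Sigma.ι X i := by
  have ι_π (i j : ι) : Sigma.ι X i ≫ Sigma.π X j ≫ Sigma.ι X j =
      if i = j then Sigma.ι X i else 0 := by
    rcases eq_or_ne i j with rfl | h
    · simp
    · rw [Sigma.ι_π_of_ne_assoc _ h, zero_comp, if_neg h]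
  obtain ⟨s, hs⟩ := hP.exists_eq_sum_comp (isColimitSigmaX X k)
    (fun i => (Sigma.π X i ≫ Sigma.ι X i).f k)
    (fun i j => (congrArg (fun f => f.f k) (ι_π i j)).trans (by split_ifs <;> rfl))
    ((HomologicalComplex.singleObjXSelf c k P).inv ≫ g.f k)
  refine ⟨s, HomologicalComplex.from_single_hom_ext ((cancel_epi
    (HomologicalComplex.singleObjXSelf c k P).inv).1 (hs.trans ?_))⟩
  have f_sum : (∑ i ∈ s, g ≫ Sigma.π X i ≫ Sigma.ι X i).f k =
      ∑ i ∈ s, g.f k ≫ (Sigma.π X i ≫ Sigma.ι X i).f k :=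
    (HomologicalComplex.eval C c k).map_sum _ s
  simp [f_sum, Preadditive.comp_sum]

variable {C : Type*} [Category* C] [Abelian C] [HasDerivedCategory C] [HasCoproducts.{w} C]
variable [AB4OfSize.{w} C]

lemma isCompactObj_singleFunctor_obj {P : C} [Projective P] (hP : IsCompactObj.{w} P) (k : ℤ) :
    IsCompactObj.{w} ((singleFunctor C k).obj P) :=
  isCompactObj_of_essSurj Q fun ι X => eq_top_iff.2 fun x _ => by
    classical
    obtain ⟨g, rfl⟩ := Q_map_surjective ((HomologicalComplex.single C (.up ℤ) k).obj P) (∐ X) x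
    obtain ⟨s, hs⟩ := exists_eq_sum_comp_of_single hP g
    rw [hs, Functor.map_sum]
    exact sum_mem fun i _ => AddSubmonoid.mem_iSup_of_mem i
      ⟨Q.map (g ≫ Sigma.π X i), (Q.map_comp _ _).symm.trans (congrArg Q.map (Category.assoc _ _ _))⟩

lemma isCompactGeneratingFamily_singleFunctor_obj {P : C} [Projective P]
    (hP : IsCompactObj.{w} P) (hP' : IsSeparator P) :
    IsCompactGeneratingFamily.{w} fun k => (singleFunctor C k).obj P where
  exists_iso_shift := fun k n => ⟨k - n,
    ⟨(((singleFunctors C).shiftIso n (k - n) k (by lia)).app P).symm⟩⟩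
  isCompactObj := isCompactObj_singleFunctor_obj hP
  isZero _ hY := isZero_of_isZero_homologyFunctor_obj fun k =>
    isZero_homologyFunctor_obj_of_isSeparator hP' (hY k)

end CompactSingle

section Ring

variable (R : Type u) [Ring R]

instance projective_self : Projective (ModuleCat.of R R) :=
  ModuleCat.projective_of_free (Module.Basis.singleton Unit R)

lemma isSeparator_self : IsSeparator (ModuleCat.of R R) :=
  (isSeparator_def _).2 fun M N f g h => by
    ext m
    simpa using congrArg (fun k => k.hom (1 : R))
      (h (ModuleCat.ofHom (LinearMap.toSpanSingleton R M m)))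

variable {R}

lemma iSup_range_inj_hom {ι : Type*} {M : ι → ModuleCat.{v} R} {c : Cofan M} (hc : IsColimit c) :
    ⨆ i, LinearMap.range (c.inj i).hom = ⊤ := by
  set W : Submodule R c.pt := ⨆ i, LinearMap.range (c.inj i).hom
  have mkQ_eq_zero : ModuleCat.ofHom W.mkQ = 0 := Cofan.IsColimit.hom_ext hc _ _ fun i => by
    ext x
    exact (Submodule.Quotient.mk_eq_zero W).2 (Submodule.mem_iSup_of_mem i ⟨x, rfl⟩)
  rw [← W.ker_mkQ, LinearMap.ker_eq_top]
  exact congrArg ModuleCat.Hom.hom mkQ_eq_zero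

lemma isCompactObj_self : IsCompactObj.{w} (ModuleCat.of R R) := by
  refine isCompactObj_iff.2 fun ι M c hc => eq_top_iff.2 fun f _ => ?_
  set S := ⨆ i, AddMonoidHom.mrange (Preadditive.rightComp (ModuleCat.of R R) (c.inj i))
  let toHom : c.pt →+ (ModuleCat.of R R ⟶ c.pt) := AddMonoidHom.mk'
    (fun m => ModuleCat.ofHom (LinearMap.toSpanSingleton R c.pt m))
    fun m n => ModuleCat.hom_ext (LinearMap.ext_ring (by simp))
  have toHom_mem (m : c.pt) : toHom m ∈ S := by
    refine Submodule.iSup_induction (motive := fun m => toHom m ∈ S) _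
      ((iSup_range_inj_hom hc).ge (Submodule.mem_top (x := m))) ?_ ?_ ?_
    · rintro i _ ⟨m, rfl⟩
      refine AddSubmonoid.mem_iSup_of_mem i
        ⟨ModuleCat.ofHom (LinearMap.toSpanSingleton R (M i) m), ?_⟩
      exact ModuleCat.hom_ext (LinearMap.ext_ring (by simp [toHom, Preadditive.rightComp]))
    · exact toHom.map_zero.symm ▸ S.zero_mem
    · exact fun m n hm hn => (toHom.map_add m n).symm ▸ S.add_mem hm hn
  have f_eq : f = toHom (f.hom (1 : R)) :=
    ModuleCat.hom_ext (LinearMap.ext_ring (by simp [toHom]))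
  exact f_eq ▸ toHom_mem _

end Ring

section Truncation

open Triangulated

variable {T : Type*} [Category* T] [Preadditive T] [HasZeroObject T] [HasShift T ℤ]
variable [∀ n : ℤ, (shiftFunctor T n).Additive] [Pretriangulated T] (t : TStructure T)

instance linear_truncLT (R : Type*) [Semiring R] [Linear R T] (n : ℤ) :
    (t.truncLT n).Linear R where
  map_smul f r := t.to_truncLT_obj_ext (by
    rw [(t.truncLTι n).naturality, Linear.smul_comp, (t.truncLTι n).naturality]
    exact Linear.comp_smul ..)

instance linear_truncGE (R : Type*) [Semiring R] [Linear R T] (n : ℤ) :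
    (t.truncGE n).Linear R where
  map_smul f r := t.from_truncGE_obj_ext (by
    rw [← (t.truncGEπ n).naturality, Linear.comp_smul, ← (t.truncGEπ n).naturality]
    exact Linear.smul_comp ..)

lemma inf_bounded_le [IsTriangulated T] {P Q : ObjectProperty T} [P.IsTriangulatedClosed₂]
    [P.IsClosedUnderIsomorphisms] (hLT : ∀ X n, Q X → Q ((t.truncLT n).obj X))
    (hGE : ∀ X n, Q X → Q ((t.truncGE n).obj X))
    (hP : ∀ X n, t.IsGE X n → t.IsLE X n → Q X → P X) : Q ⊓ t.bounded ≤ P := by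
  have prop_of_amplitude_le (m : ℕ) :
      ∀ (a : ℤ) (X : T), t.IsGE X a → t.IsLE X (a + m) → Q X → P X := by
    induction m with
    | zero => exact fun a X hX hX' => hP X a hX (by simpa using hX')
    | succ m ih =>
      intro a X _ hX' hQ
      have : t.IsLE X (a + 1 + m) := by rwa [Nat.cast_succ, ← add_assoc, add_right_comm] at hX'
      exact P.ext_of_isTriangulatedClosed₂ _ (t.triangleLTGE_distinguished (a + 1) X)
        (hP ((t.truncLT (a + 1)).obj X) a inferInstance inferInstance (hLT X _ hQ))
        (ih (a + 1) ((t.truncGE (a + 1)).obj X) inferInstance inferInstance (hGE X _ hQ))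
  rintro X ⟨hQ, ⟨a, hX⟩, b, hX'⟩
  exact prop_of_amplitude_le (b - a).toNat a X hX (t.isLE_of_le X b _ (by lia)) hQ

end Truncation

section SingleShortExact

open DerivedCategory

variable {C : Type*} [Category* C] [Abelian C] [HasDerivedCategory C] {S : ShortComplex C}

lemma exists_distTriang_singleFunctor (hS : S.ShortExact) (n : ℤ) :
    ∃ δ, Triangle.mk ((singleFunctor C n).map S.f) ((singleFunctor C n).map S.g) δ ∈
      distTriang (DerivedCategory C) :=
  ⟨_, triangleOfSES_distinguished (hS.map_of_exact (HomologicalComplex.single C (.up ℤ) n))⟩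

lemma exists_ghost_of_shortExact (G : C) [Projective G]
    {P : ObjectProperty (DerivedCategory C)} [P.IsTriangulated] (hS : S.ShortExact) {n : ℤ}
    (hP : P ((singleFunctor C n).obj S.X₂)) :
    ∃ p : (singleFunctor C n).obj S.X₃ ⟶ (singleFunctor C (n - 1)).obj S.X₁,
      IsGhost (fun k => (singleFunctor C k).obj G) p ∧ P.trW p := by
  have := hS.epi_g
  obtain ⟨δ, hδ⟩ := exists_distTriang_singleFunctor hS n
  let e := ((singleFunctors C).shiftIso 1 (n - 1) n (by lia)).app S.X₁
  refine ⟨δ ≫ e.hom, fun k x => ?_, ?_⟩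
  · obtain ⟨y, rfl⟩ := exists_comp_singleFunctor_map_eq S.g x
    have : (singleFunctor C n).map S.g ≫ δ = 0 := comp_distTriang_mor_zero₂₃ _ hδ
    rw [Category.assoc, reassoc_of% this, zero_comp, comp_zero]
  · have : P.trW δ := (P.trW_iff' _).2 ⟨_, _, _, rot_of_distTriang _ hδ, hP⟩
    exact P.trW.comp_mem _ _ this (P.trW_of_isIso _)

end SingleShortExact

section QuotientModules

variable {R : Type u} [CommRing R] {I : Ideal R}

lemma le_annihilator_iff_smul_id_eq_zero {M : ModuleCat.{v} R} :
    I ≤ Module.annihilator R M ↔ ∀ r ∈ I, r • 𝟙 M = 0 :=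
  forall₂_congr fun _ _ => Module.mem_annihilator_iff_lsmul_eq_zero.trans
    ⟨fun h => ModuleCat.hom_ext h, fun h => congrArg ModuleCat.Hom.hom h⟩

lemma le_annihilator_sigma {ι : Type v} {M : ι → ModuleCat.{v} R}
    (hM : ∀ i, I ≤ Module.annihilator R (M i)) :
    I ≤ Module.annihilator R (∐ M : ModuleCat.{v} R) := by
  refine le_annihilator_iff_smul_id_eq_zero.2 fun r hr => Limits.Sigma.hom_ext _ _ fun i => ?_
  calc Limits.Sigma.ι M i ≫ (r • 𝟙 (∐ M)) = (r • 𝟙 (M i)) ≫ Limits.Sigma.ι M i := by simp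
    _ = Limits.Sigma.ι M i ≫ 0 := by simp [le_annihilator_iff_smul_id_eq_zero.1 (hM i) r hr]

lemma exists_epi_sigma_quotient {M : ModuleCat.{u} R} (hM : I ≤ Module.annihilator R M) :
    ∃ φ : (∐ fun _ : M => ModuleCat.of R (R ⧸ I)) ⟶ M, Epi φ := by
  let φ : (∐ fun _ : M => ModuleCat.of R (R ⧸ I)) ⟶ M := Limits.Sigma.desc fun m =>
    ModuleCat.ofHom (I.liftQ (LinearMap.toSpanSingleton R M m)
      fun r hr => Module.mem_annihilator.1 (hM hr) m)
  refine ⟨φ, (ModuleCat.epi_iff_surjective φ).2 fun m => ⟨(Limits.Sigma.ι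
    (fun _ : M => ModuleCat.of R (R ⧸ I)) m).hom (Ideal.Quotient.mk I 1), ?_⟩⟩
  have ι_φ := congrArg ModuleCat.Hom.hom (Limits.Sigma.ι_desc (fun m =>
    ModuleCat.ofHom (I.liftQ (LinearMap.toSpanSingleton R M m)
      fun r hr => Module.mem_annihilator.1 (hM hr) m)) m)
  exact (LinearMap.congr_fun ι_φ _).trans (one_smul R m)

lemma le_annihilator_of_pow_succ_smul {M : Type*} [AddCommGroup M] [Module R M] {n : ℕ}
    (hM : I ^ (n + 1) ≤ Module.annihilator R M) :
    I ^ n ≤ Module.annihilator R (I • ⊤ : Submodule R M) := by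
  rw [← Submodule.annihilator_top, Submodule.le_annihilator_iff] at hM
  rwa [← Submodule.annihilator, Submodule.le_annihilator_iff, ← Submodule.mul_smul, ← pow_succ]

lemma le_annihilator_quotient_smul_top (M : Type*) [AddCommGroup M] [Module R M] :
    I ≤ Module.annihilator R (M ⧸ (I • ⊤ : Submodule R M)) := by
  intro r hr
  refine Module.mem_annihilator.2 fun m => ?_
  obtain ⟨m, rfl⟩ := Submodule.mkQ_surjective _ m
  exact (Submodule.Quotient.mk_eq_zero _).2 (Submodule.smul_mem_smul hr trivial)

lemma id_mem_powTorsion_of_le_annihilator {M : ModuleCat.{v} R}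
    (hM : I ≤ Module.annihilator R M) : 𝟙 M ∈ powTorsion I (M ⟶ M) :=
  mem_powTorsion_iff.2 fun r hr =>
    ⟨1, by simpa using le_annihilator_iff_smul_id_eq_zero.1 hM r hr⟩

lemma exists_pow_le_annihilator (hI : I.FG) {M : ModuleCat.{v} R}
    (hM : 𝟙 M ∈ powTorsion I (M ⟶ M)) : ∃ n : ℕ, I ^ n ≤ Module.annihilator R M := by
  obtain ⟨n, hn⟩ := exists_pow_le_torsionOf hI hM
  exact ⟨n, le_annihilator_iff_smul_id_eq_zero.2 fun r hr => hn hr⟩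

end QuotientModules

section LocQuotient

open DerivedCategory

variable {R : Type u} [CommRing R] [HasDerivedCategory.{w'} (ModuleCat.{u} R)] {I : Ideal R}
  {L : Set (DerivedCategory (ModuleCat.{u} R))}

namespace IsLocalizingSub

lemma singleFunctor_obj_mem (hL : IsLocalizingSub.{u} L) {M : ModuleCat.{u} R}
    (hM : smod R M ∈ L) (n : ℤ) : (singleFunctor _ n).obj M ∈ L :=
  hL.mem_of_iso (((singleFunctors _).shiftIso (-n) n 0 (by lia)).app M) (hL.shift_mem (-n) hM)

lemma singleFunctor_obj_sigma_mem (hL : IsLocalizingSub.{u} L) {ι : Type u}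
    {M : ι → ModuleCat.{u} R} {n : ℤ} (hM : ∀ i, (singleFunctor _ n).obj (M i) ∈ L) :
    (singleFunctor _ n).obj (∐ M) ∈ L := by
  have := hL.isClosedUnderColimitsOfShape_discrete ι
  exact hL.mem_of_iso (PreservesCoproduct.iso (singleFunctor _ n) M).symm
    (ObjectProperty.prop_colimit (· ∈ L) _ fun i => hM i.as)

lemma singleFunctor_obj_mem_of_le_annihilator (hL : IsLocalizingSub.{u} L)
    (hRI : smod R (ModuleCat.of R (R ⧸ I)) ∈ L) {M : ModuleCat.{u} R}
    (hM : I ≤ Module.annihilator R M) (n : ℤ) : (singleFunctor _ n).obj M ∈ L := by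
  let Q : ObjectProperty (DerivedCategory (ModuleCat.{u} R)) := fun Y =>
    ∃ (N : ModuleCat.{u} R) (k : ℤ), I ≤ Module.annihilator R N ∧ Y = (singleFunctor _ k).obj N
  have := hL.isTriangulated
  have := hL.isClosedUnderIsomorphisms
  have := hL.isClosedUnderColimitsOfShape_discrete ℕ
  refine (isCompactGeneratingFamily_singleFunctor_obj isCompactObj_self
    (isSeparator_self R)).prop_of_exists_ghost (Q := Q) (P := (· ∈ L)) ?_ _ ⟨M, n, hM, rfl⟩
  rintro _ ⟨N, k, hN, rfl⟩
  obtain ⟨φ, hφ⟩ := exists_epi_sigma_quotient hN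
  obtain ⟨p, hp, hp'⟩ := exists_ghost_of_shortExact (P := (· ∈ L)) (ModuleCat.of R R)
    (LinearMap.shortExact_shortComplexKer ((ModuleCat.epi_iff_surjective φ).1 hφ))
    (hL.singleFunctor_obj_sigma_mem fun _ => hL.singleFunctor_obj_mem hRI k)
  have ker_φ : I ≤ Module.annihilator R (LinearMap.ker φ.hom) :=
    (le_annihilator_sigma fun _ => I.annihilator_quotient.ge).trans
      (LinearMap.annihilator_le_of_injective (Submodule.subtype _) Subtype.val_injective)
  exact ⟨_, p, ⟨_, _, ker_φ, rfl⟩, hp, hp'⟩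

lemma singleFunctor_obj_mem_of_pow_le_annihilator (hL : IsLocalizingSub.{u} L)
    (hRI : smod R (ModuleCat.of R (R ⧸ I)) ∈ L) (n : ℤ) {N : ℕ} {M : ModuleCat.{u} R}
    (hM : I ^ N ≤ Module.annihilator R M) : (singleFunctor _ n).obj M ∈ L := by
  induction N generalizing M with
  | zero =>
    rw [pow_zero, Ideal.one_eq_top, top_le_iff] at hM
    exact hL.singleFunctor_obj_mem_of_le_annihilator hRI (hM ▸ le_top) n
  | succ N ih =>
    let W : Submodule R M := I • ⊤
    obtain ⟨δ, hδ⟩ := exists_distTriang_singleFunctor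
      (LinearMap.shortExact_shortComplexKer W.mkQ_surjective) n
    have ker_mem : (singleFunctor _ n).obj (ModuleCat.of R (LinearMap.ker W.mkQ)) ∈ L :=
      ih (by rw [W.ker_mkQ]; exact le_annihilator_of_pow_succ_smul hM)
    have quotient_mem : (singleFunctor _ n).obj (ModuleCat.of R (M ⧸ W)) ∈ L :=
      hL.singleFunctor_obj_mem_of_le_annihilator hRI (le_annihilator_quotient_smul_top M) n
    have := hL.isTriangulated
    have := hL.isClosedUnderIsomorphisms
    exact ObjectProperty.ext_of_isTriangulatedClosed₂ (· ∈ L) _ hδ ker_mem quotient_mem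

lemma mem_of_bounded_of_id_mem_powTorsion (hL : IsLocalizingSub.{u} L)
    (hRI : smod R (ModuleCat.of R (R ⧸ I)) ∈ L) (hI : I.FG)
    {K : DerivedCategory (ModuleCat.{u} R)} (hK : TStructure.t.bounded K)
    (hK' : 𝟙 K ∈ powTorsion I (K ⟶ K)) : K ∈ L := by
  have := hL.isTriangulated
  have := hL.isClosedUnderIsomorphisms
  refine inf_bounded_le TStructure.t (P := (· ∈ L)) (Q := fun K => 𝟙 K ∈ powTorsion I (K ⟶ K))
    (fun _ _ => id_obj_mem_powTorsion _) (fun _ _ => id_obj_mem_powTorsion _)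
    (fun X n _ _ hX => ?_) K ⟨hK', hK⟩
  obtain ⟨M, ⟨e⟩⟩ := exists_iso_singleFunctor_obj_of_isGE_of_isLE X n
  obtain ⟨N, hN⟩ := exists_pow_le_annihilator hI (id_mem_powTorsion_of_id_obj_mem
    (singleFunctor _ n) (id_mem_powTorsion_of_iso e hX))
  exact hL.mem_of_iso e.symm (hL.singleFunctor_obj_mem_of_pow_le_annihilator hRI n hN)

end IsLocalizingSub

lemma loc_eq_torsionObjects (hI : I.FG) : Loc.{u} {smod R (ModuleCat.of R (R ⧸ I))} =
    torsionObjects (fun k => (singleFunctor (ModuleCat.{u} R) k).obj (ModuleCat.of R R)) I := by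
  have hG : IsCompactGeneratingFamily.{u} fun k =>
      (singleFunctor (ModuleCat.{u} R) k).obj (ModuleCat.of R R) :=
    isCompactGeneratingFamily_singleFunctor_obj isCompactObj_self (isSeparator_self R)
  have hL := isLocalizingSub_loc.{u} {smod R (ModuleCat.of R (R ⧸ I))}
  refine ((loc_subset_iff (hG.isLocalizingSub_torsionObjects I)).2 ?_).antisymm ?_
  · exact Set.singleton_subset_iff.2 <| mem_torsionObjects_of_id_mem _ <|
      id_obj_mem_powTorsion (singleFunctor _ 0) <|
        id_mem_powTorsion_of_le_annihilator I.annihilator_quotient.ge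
  · have (k : ℤ) (Y) := small_singleFunctor_obj_hom.{u} (ModuleCat.of R R) k Y
    exact hG.torsionObjects_subset hI TStructure.t.bounded
      (fun k => ⟨⟨k, inferInstance⟩, k, inferInstance⟩) hL fun K =>
        hL.mem_of_bounded_of_id_mem_powTorsion (subset_loc _ rfl) hI

end LocQuotient

/-- Theorem: for finitely generated ideals `I`, `J` of `R`,
`Loc(R/I) ∩ Loc(R/J) = Loc(R/(I + J))` in `D(R)`. -/
theorem loc_inter_loc_eq_loc_sup (R : Type u) [CommRing R]
    [HasDerivedCategory.{w'} (ModuleCat.{u} R)]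
    (I J : Ideal R) (hI : I.FG) (hJ : J.FG) :
    Loc.{u} {smod R (ModuleCat.of R (R ⧸ I))} ∩
        Loc.{u} {smod R (ModuleCat.of R (R ⧸ J))} =
      Loc.{u} {smod R (ModuleCat.of R (R ⧸ (I + J)))} := by
  rw [Submodule.add_eq_sup, loc_eq_torsionObjects hI, loc_eq_torsionObjects hJ,
    loc_eq_torsionObjects (Submodule.FG.sup hI hJ), torsionObjects_sup]
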